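/- Let d ≥ 1 and let U be a nonempty connected open subset of ℂ^d. Let g₁, …, g_N : U → ℂ be holomorphic, and let (f_j)_{j∈ℕ} be a sequence of holomorphic functions U → ℂ such that for every z ∈ U the family (|f_j(z)|²)_{j∈ℕ} is summable and Σ_{k=1}^N |g_k(z)|² = ∑'_{j∈ℕ} |f_j(z)|². Then every f_j lies in the ℂ-linear span of {g₁, …, g_N} inside the space of functions U → ℂ; in particular the family (f_j)_{j∈ℕ} is not linearly independent over ℂ. -/

import Mathlib

/-!
The equality `∑ |g k|² = ∑ |f j|²` on the diagonal polarizes: restricted to a complex line, both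
`∑ f j s * conj (f j (conj s))` and `∑ g k s * conj (g k (conj s))` are holomorphic in `s` and agree
for real `s`, hence agree everywhere. Holomorphy of the infinite sum comes from Dini's theorem: the
series `∑ |f j|²` converges locally uniformly because its sum is continuous, and it controls the
tails of the polarized series. Once the hermitian kernels agree, a combination of point evaluations
that kills every `g k` kills every `f j`, so the `f j` lie in the span of the `g k`. Polarization
needs enough complex lines, so it is done on a ball; the identity theorem carries the linear
relations found there to the whole domain.
-/

open Filter Topology ComplexConjugate

section HermitianKernel

variable {𝕜 X ι κ : Type*} [RCLike 𝕜]

/-- The hermitian kernel `K(z, w) = ∑ f j z * conj (f j w)` of a family of scalar functions, whose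
diagonal is the hermitian sum of squares `∑ |f j z|²`. The series converges wherever the sums of
squares at both points do; otherwise the value may be the junk value `0` of `tsum`. -/
noncomputable def hermitianKernel (f : ι → X → 𝕜) (z w : X) : 𝕜 :=
  ∑' j, f j z * conj (f j w)

theorem norm_mul_conj_le (a b : 𝕜) : ‖a * conj b‖ ≤ (‖a‖ ^ 2 + ‖b‖ ^ 2) / 2 := by
  rw [norm_mul, RCLike.norm_conj]
  linarith [two_mul_le_add_sq ‖a‖ ‖b‖]

theorem hasSum_hermitianKernel {f : ι → X → 𝕜} {z w : X} (hz : Summable fun j => ‖f j z‖ ^ 2)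
    (hw : Summable fun j => ‖f j w‖ ^ 2) :
    HasSum (fun j => f j z * conj (f j w)) (hermitianKernel f z w) :=
  (((hz.add hw).div_const 2).of_norm_bounded fun j => norm_mul_conj_le (f j z) (f j w)).hasSum

theorem hermitianKernel_self {f : ι → X → 𝕜} {z : X} {a : ℝ}
    (h : HasSum (fun j => ‖f j z‖ ^ 2) a) : hermitianKernel f z z = (a : 𝕜) := by
  simpa [hermitianKernel, RCLike.mul_conj] using (h.mapL (RCLike.ofRealCLM (K := 𝕜))).tsum_eq

theorem norm_sq_linearCombination (u : X → 𝕜) (v : X →₀ 𝕜) :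
    ((‖Finsupp.linearCombination 𝕜 u v‖ ^ 2 : ℝ) : 𝕜) =
      ∑ x ∈ v.support, ∑ y ∈ v.support, v x * conj (v y) * (u x * conj (u y)) := by
  rw [RCLike.ofReal_pow, ← RCLike.mul_conj, Finsupp.linearCombination_apply, Finsupp.sum, map_sum,
    Finset.sum_mul_sum]
  refine Finset.sum_congr rfl fun x _ => Finset.sum_congr rfl fun y _ => ?_
  simp only [smul_eq_mul, map_mul]
  ring

theorem hasSum_norm_sq_linearCombination {f : ι → X → 𝕜}
    (hf : ∀ x, Summable fun j => ‖f j x‖ ^ 2) (v : X →₀ 𝕜) :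
    HasSum (fun j => ((‖Finsupp.linearCombination 𝕜 (f j) v‖ ^ 2 : ℝ) : 𝕜))
      (∑ x ∈ v.support, ∑ y ∈ v.support, v x * conj (v y) * hermitianKernel f x y) := by
  simp only [norm_sq_linearCombination]
  exact hasSum_sum fun x _ => hasSum_sum fun y _ =>
    (hasSum_hermitianKernel (hf x) (hf y)).mul_left _

theorem linearCombination_eq_zero_of_hermitianKernel_eq {f : ι → X → 𝕜} {g : κ → X → 𝕜}
    (hf : ∀ x, Summable fun j => ‖f j x‖ ^ 2) (hg : ∀ x, Summable fun k => ‖g k x‖ ^ 2)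
    (hfg : hermitianKernel f = hermitianKernel g) {v : X →₀ 𝕜}
    (hv : ∀ k, Finsupp.linearCombination 𝕜 (g k) v = 0) (j : ι) :
    Finsupp.linearCombination 𝕜 (f j) v = 0 := by
  have hsum_g := hasSum_norm_sq_linearCombination hg v
  simp only [hv, norm_zero, ne_eq, OfNat.ofNat_ne_zero, not_false_eq_true, zero_pow,
    RCLike.ofReal_zero] at hsum_g
  have hsum_f := hasSum_norm_sq_linearCombination hf v
  rw [hfg, hsum_g.unique hasSum_zero, ← RCLike.ofReal_zero, RCLike.hasSum_ofReal] at hsum_f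
  simpa using congrFun ((hasSum_zero_iff_of_nonneg fun j => by positivity).1 hsum_f) j

theorem mem_span_range_of_hermitianKernel_eq [Finite κ] {f : ι → X → 𝕜} {g : κ → X → 𝕜}
    (hf : ∀ x, Summable fun j => ‖f j x‖ ^ 2) (hfg : hermitianKernel f = hermitianKernel g)
    (j : ι) : f j ∈ Submodule.span 𝕜 (Set.range g) := by
  have : Fintype κ := Fintype.ofFinite κ
  have hker : ⨅ k, LinearMap.ker (Finsupp.linearCombination 𝕜 (g k)) ≤
      LinearMap.ker (Finsupp.linearCombination 𝕜 (f j)) := by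
    intro v hv
    simp only [Submodule.mem_iInf, LinearMap.mem_ker] at hv ⊢
    exact linearCombination_eq_zero_of_hermitianKernel_eq hf (fun _ => .of_finite) hfg hv j
  obtain ⟨c, hc⟩ := (Submodule.mem_span_range_iff_exists_fun 𝕜).1 (mem_span_of_iInf_ker_le_ker hker)
  refine (Submodule.mem_span_range_iff_exists_fun 𝕜).2 ⟨c, funext fun x => ?_⟩
  simpa using LinearMap.congr_fun hc (Finsupp.single x 1)

end HermitianKernel

section LocallyUniformConvergence

variable {α ι : Type*} [TopologicalSpace α] {S : Set α}

theorem hasSumLocallyUniformlyOn_of_continuousOn_of_nonneg {u : ι → α → ℝ} {H : α → ℝ}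
    (hu : ∀ i, ContinuousOn (u i) S) (hu_nonneg : ∀ i, ∀ x ∈ S, 0 ≤ u i x)
    (hH : ContinuousOn H S) (h : ∀ x ∈ S, HasSum (u · x) (H x)) : HasSumLocallyUniformlyOn u H S :=
  Monotone.tendstoLocallyUniformlyOn_of_forall_tendsto
    (fun t => continuousOn_finsetSum t fun i _ => hu i)
    (fun x hx _ _ hst => Finset.sum_le_sum_of_subset_of_nonneg hst fun i _ _ => hu_nonneg i x hx)
    hH h

theorem hasSumLocallyUniformlyOn_tsum_of_norm_bounded {F : Type*} [NormedAddCommGroup F]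
    [CompleteSpace F] {u : ι → α → ℝ} {H : α → ℝ} {φ : ι → α → F}
    (hu : HasSumLocallyUniformlyOn u H S) (hφ : ∀ i, ∀ x ∈ S, ‖φ i x‖ ≤ u i x) :
    HasSumLocallyUniformlyOn φ (fun x => ∑' i, φ i x) S := by
  have tail_le (t : Finset ι) {x : α} (hx : x ∈ S) :
      dist (∑' i, φ i x) (∑ i ∈ t, φ i x) ≤ dist (H x) (∑ i ∈ t, u i x) := by
    have hu_tail := t.hasSum_iff_compl.1 (hu.hasSum hx)
    have hφ_sum := (hu.hasSum hx).summable.of_norm_bounded fun i => hφ i x hx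
    rw [dist_eq_norm, Real.dist_eq, ← (t.hasSum_iff_compl.1 hφ_sum.hasSum).tsum_eq]
    exact (tsum_of_norm_bounded hu_tail fun i => hφ i x hx).trans (le_abs_self _)
  rw [hasSumLocallyUniformlyOn_iff_tendstoLocallyUniformlyOn,
    Metric.tendstoLocallyUniformlyOn_iff] at hu ⊢
  intro ε hε x hx
  obtain ⟨t, ht, hclose⟩ := hu ε hε x hx
  exact ⟨t ∩ S, inter_mem ht self_mem_nhdsWithin,
    hclose.mono fun s hs y hy => (tail_le s hy.2).trans_lt (hs y hy.1)⟩

end LocallyUniformConvergence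

section OneVariable

variable {ι κ : Type*} {S : Set ℂ}

theorem differentiableOn_mul_conj_conj {u : ℂ → ℂ} (hu : DifferentiableOn ℂ u S) (hSo : IsOpen S)
    (hSconj : Set.MapsTo conj S S) : DifferentiableOn ℂ (fun s => u s * conj (u (conj s))) S :=
  hu.mul fun _ hs => (differentiableAt_conj_conj_iff.2 <|
    hu.differentiableAt <| hSo.mem_nhds <| hSconj hs).differentiableWithinAt

theorem differentiableOn_hermitianKernel_conj {φ : ι → ℂ → ℂ} {H : ℂ → ℝ} (hSo : IsOpen S)
    (hSconj : Set.MapsTo conj S S) (hφ : ∀ j, DifferentiableOn ℂ (φ j) S)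
    (hH : ContinuousOn H S) (h : ∀ s ∈ S, HasSum (fun j => ‖φ j s‖ ^ 2) (H s)) :
    DifferentiableOn ℂ (fun s => hermitianKernel φ s (conj s)) S := by
  have hcomp_conj {Y : Type} [TopologicalSpace Y] {u : ℂ → Y} (hu : ContinuousOn u S) :
      ContinuousOn (fun s => u (conj s)) S :=
    hu.comp Complex.continuous_conj.continuousOn hSconj
  have hmajorant : HasSumLocallyUniformlyOn
      (fun j s => (‖φ j s‖ ^ 2 + ‖φ j (conj s)‖ ^ 2) / 2) (fun s => (H s + H (conj s)) / 2) S := by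
    refine hasSumLocallyUniformlyOn_of_continuousOn_of_nonneg (fun j => ?_)
      (fun _ _ _ => by positivity) ((hH.add (hcomp_conj hH)).div_const 2)
      fun s hs => ((h s hs).add (h _ (hSconj hs))).div_const 2
    have hφ_cont := (hφ j).continuousOn
    exact ((hφ_cont.norm.pow 2).add ((hcomp_conj hφ_cont).norm.pow 2)).div_const 2
  have hkernel := hasSumLocallyUniformlyOn_tsum_of_norm_bounded hmajorant
    fun j s _ => norm_mul_conj_le (φ j s) (φ j (conj s))
  refine TendstoLocallyUniformlyOn.differentiableOn hkernel (.of_forall fun t => ?_) hSo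
  exact DifferentiableOn.fun_sum fun j _ => differentiableOn_mul_conj_conj (hφ j) hSo hSconj

theorem eqOn_of_differentiableOn_of_eq_ofReal {F : Type*} [NormedAddCommGroup F] [NormedSpace ℂ F]
    [CompleteSpace F] {p q : ℂ → F} (hp : DifferentiableOn ℂ p S) (hq : DifferentiableOn ℂ q S)
    (hSo : IsOpen S) (hSc : IsPreconnected S) {a : ℝ} (ha : (a : ℂ) ∈ S)
    (hpq : ∀ r : ℝ, (r : ℂ) ∈ S → p r = q r) : Set.EqOn p q S := by
  have htendsto : Tendsto ((↑) : ℝ → ℂ) (𝓝[≠] a) (𝓝[≠] (a : ℂ)) :=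
    Complex.continuous_ofReal.continuousWithinAt.tendsto_nhdsWithin fun _ _ => by simp_all
  have hfreq : ∃ᶠ s in 𝓝[≠] (a : ℂ), p s = q s := by
    refine htendsto.frequently (Eventually.frequently ?_)
    filter_upwards [htendsto (mem_nhdsWithin_of_mem_nhds (hSo.mem_nhds ha))] with r hr
    exact hpq r hr
  exact (hp.analyticOnNhd hSo).eqOn_of_preconnected_of_frequently_eq (hq.analyticOnNhd hSo) hSc ha
    hfreq

theorem hermitianKernel_conj_eq_of_hasSum_norm_sq {φ : ι → ℂ → ℂ} {γ : κ → ℂ → ℂ} {H : ℂ → ℝ}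
    (hSo : IsOpen S) (hSc : IsPreconnected S) (hSconj : Set.MapsTo conj S S)
    {a : ℝ} (ha : (a : ℂ) ∈ S) (hφ : ∀ j, DifferentiableOn ℂ (φ j) S)
    (hγ : ∀ k, DifferentiableOn ℂ (γ k) S) (hH : ContinuousOn H S)
    (hφH : ∀ s ∈ S, HasSum (fun j => ‖φ j s‖ ^ 2) (H s))
    (hγH : ∀ s ∈ S, HasSum (fun k => ‖γ k s‖ ^ 2) (H s)) :
    Set.EqOn (fun s => hermitianKernel φ s (conj s)) (fun s => hermitianKernel γ s (conj s)) S := by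
  refine eqOn_of_differentiableOn_of_eq_ofReal
    (differentiableOn_hermitianKernel_conj hSo hSconj hφ hH hφH)
    (differentiableOn_hermitianKernel_conj hSo hSconj hγ hH hγH) hSo hSc ha fun r hr => ?_
  simp only [Complex.conj_ofReal, hermitianKernel_self (hφH r hr), hermitianKernel_self (hγH r hr)]

end OneVariable

section Polarization

variable {E ι κ : Type*} [NormedAddCommGroup E] [NormedSpace ℂ E] {V : Set E}
  {f : ι → E → ℂ} {g : κ → E → ℂ} {H : E → ℝ}

theorem hermitianKernel_eq_on_line (hVo : IsOpen V) (hVc : Convex ℝ V)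
    (hf : ∀ j, DifferentiableOn ℂ (f j) V) (hg : ∀ k, DifferentiableOn ℂ (g k) V)
    (hH : ContinuousOn H V) (hfH : ∀ z ∈ V, HasSum (fun j => ‖f j z‖ ^ 2) (H z))
    (hgH : ∀ z ∈ V, HasSum (fun k => ‖g k z‖ ^ 2) (H z)) {m v : E} (hm : m ∈ V) {s : ℂ}
    (hs : m + s • v ∈ V) (hs_conj : m + conj s • v ∈ V) :
    hermitianKernel f (m + s • v) (m + conj s • v) =
      hermitianKernel g (m + s • v) (m + conj s • v) := by
  let line (t : ℂ) : E := m + t • v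
  have hline : Differentiable ℂ line := by fun_prop
  have hline_convex : Convex ℝ (line ⁻¹' V) :=
    (hVc.translate_preimage_right m).linear_preimage
      ((LinearMap.toSpanSingleton ℂ E v).restrictScalars ℝ)
  have hline_open : IsOpen (line ⁻¹' V) := hVo.preimage hline.continuous
  let S : Set ℂ := line ⁻¹' V ∩ conj ⁻¹' (line ⁻¹' V)
  have hS_convex : Convex ℝ S :=
    hline_convex.inter (hline_convex.linear_preimage Complex.conjAe.toLinearMap)
  have hS_open : IsOpen S := hline_open.inter (hline_open.preimage Complex.continuous_conj)
  have hS_conj : Set.MapsTo conj S S := fun t ht => ⟨ht.2, by simpa using ht.1⟩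
  have hS_zero : ((0 : ℝ) : ℂ) ∈ S := by simpa [S, line] using hm
  have hS_maps : Set.MapsTo line S V := fun t ht => ht.1
  exact hermitianKernel_conj_eq_of_hasSum_norm_sq hS_open hS_convex.isPreconnected hS_conj hS_zero
    (fun j => (hf j).comp hline.differentiableOn hS_maps)
    (fun k => (hg k).comp hline.differentiableOn hS_maps)
    (hH.comp hline.continuous.continuousOn hS_maps)
    (fun t ht => hfH _ (hS_maps ht)) (fun t ht => hgH _ (hS_maps ht)) ⟨hs, hs_conj⟩

theorem hermitianKernel_eq_of_hasSum_norm_sq (hVo : IsOpen V) (hVc : Convex ℝ V)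
    (hf : ∀ j, DifferentiableOn ℂ (f j) V) (hg : ∀ k, DifferentiableOn ℂ (g k) V)
    (hH : ContinuousOn H V) (hfH : ∀ z ∈ V, HasSum (fun j => ‖f j z‖ ^ 2) (H z))
    (hgH : ∀ z ∈ V, HasSum (fun k => ‖g k z‖ ^ 2) (H z)) {z w : E} (hz : z ∈ V) (hw : w ∈ V) :
    hermitianKernel f z w = hermitianKernel g z w := by
  -- On this complex line the conjugate parameters `I` and `-I` correspond to `z` and `w`.
  let v : E := (-Complex.I / 2) • (z - w)
  have hIv : Complex.I • v = (2⁻¹ : ℝ) • (z - w) := by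
    rw [← Complex.coe_smul, smul_smul]
    congr 1
    push_cast
    linear_combination (-1 / 2) * Complex.I_mul_I
  have hz_line : midpoint ℝ z w + Complex.I • v = z := by
    rw [hIv, midpoint_eq_smul_add, invOf_eq_inv]
    module
  have hw_line : midpoint ℝ z w + conj Complex.I • v = w := by
    rw [Complex.conj_I, neg_smul, hIv, midpoint_eq_smul_add, invOf_eq_inv]
    module
  have hline := hermitianKernel_eq_on_line hVo hVc hf hg hH hfH hgH (hVc.midpoint_mem hz hw)
    (v := v) (s := Complex.I) (by rwa [hz_line]) (by rwa [hw_line])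
  rwa [hz_line, hw_line] at hline

end Polarization

theorem domRestrict_mem_span_of_mem_nhds {𝕜 E F κ : Type*} [NontriviallyNormedField 𝕜]
    [NormedAddCommGroup E] [NormedSpace 𝕜 E] [NormedAddCommGroup F] [NormedSpace 𝕜 F] [Finite κ]
    {U V : Set E} {p : E} {f : E → F} {g : κ → E → F} (hU : IsPreconnected U) (hp : p ∈ U)
    (hV : V ∈ 𝓝 p) (hf : AnalyticOnNhd 𝕜 f U) (hg : ∀ k, AnalyticOnNhd 𝕜 (g k) U)
    (h : V.domRestrict f ∈ Submodule.span 𝕜 (Set.range fun k => V.domRestrict (g k))) :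
    U.domRestrict f ∈ Submodule.span 𝕜 (Set.range fun k => U.domRestrict (g k)) := by
  have : Fintype κ := Fintype.ofFinite κ
  obtain ⟨c, hc⟩ := (Submodule.mem_span_range_iff_exists_fun 𝕜).1 h
  have hcombination : AnalyticOnNhd 𝕜 (fun z => ∑ k, c k • g k z) U :=
    Finset.analyticOnNhd_fun_sum _ fun k _ => analyticOnNhd_const.smul (hg k)
  have heqOn : Set.EqOn (fun z => ∑ k, c k • g k z) f U := by
    refine hcombination.eqOn_of_preconnected_of_eventuallyEq hf hU hp ?_
    filter_upwards [hV] with z hz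
    simpa using congrFun hc ⟨z, hz⟩
  refine (Submodule.mem_span_range_iff_exists_fun 𝕜).2 ⟨c, funext fun z => ?_⟩
  simpa using heqOn z.2

section Rigidity

variable {E ι κ : Type*} [NormedAddCommGroup E] [NormedSpace ℂ E] [Fintype κ] {U : Set E}
  {f : ι → E → ℂ} {g : κ → E → ℂ}

theorem domRestrict_mem_span_of_convex (hUo : IsOpen U) (hUc : Convex ℝ U)
    (hf : ∀ j, DifferentiableOn ℂ (f j) U) (hg : ∀ k, DifferentiableOn ℂ (g k) U)
    (h : ∀ z ∈ U, HasSum (fun j => ‖f j z‖ ^ 2) (∑ k, ‖g k z‖ ^ 2)) (j : ι) :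
    U.domRestrict (f j) ∈ Submodule.span ℂ (Set.range fun k => U.domRestrict (g k)) := by
  have hcont : ContinuousOn (fun z => ∑ k, ‖g k z‖ ^ 2) U :=
    continuousOn_finsetSum _ fun k _ => (hg k).continuousOn.norm.pow 2
  have hkernel : hermitianKernel (fun j => U.domRestrict (f j)) =
      hermitianKernel fun k => U.domRestrict (g k) := by
    ext z w
    exact hermitianKernel_eq_of_hasSum_norm_sq hUo hUc hf hg hcont h
      (fun z _ => hasSum_fintype _) z.2 w.2
  exact mem_span_range_of_hermitianKernel_eq (f := fun j => U.domRestrict (f j))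
    (fun z => (h z z.2).summable) hkernel j

theorem domRestrict_mem_span_of_hasSum_norm_sq (hUo : IsOpen U) (hUc : IsConnected U)
    (hf : ∀ j, AnalyticOn ℂ (f j) U) (hg : ∀ k, AnalyticOn ℂ (g k) U)
    (h : ∀ z ∈ U, HasSum (fun j => ‖f j z‖ ^ 2) (∑ k, ‖g k z‖ ^ 2)) (j : ι) :
    U.domRestrict (f j) ∈ Submodule.span ℂ (Set.range fun k => U.domRestrict (g k)) := by
  obtain ⟨p, hp⟩ := hUc.nonempty
  obtain ⟨r, hr, hball⟩ := Metric.isOpen_iff.1 hUo p hp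
  refine domRestrict_mem_span_of_mem_nhds hUc.isPreconnected hp
    (Metric.ball_mem_nhds p hr) (hUo.analyticOn_iff_analyticOnNhd.1 (hf j))
    (fun k => hUo.analyticOn_iff_analyticOnNhd.1 (hg k)) ?_
  exact domRestrict_mem_span_of_convex Metric.isOpen_ball (convex_ball p r)
    (fun j => (hf j).differentiableOn.mono hball) (fun k => (hg k).differentiableOn.mono hball)
    (fun z hz => h z (hball hz)) j

theorem stmt_1_general [Infinite ι] (hUo : IsOpen U) (hUc : IsConnected U)
    (hf : ∀ j, AnalyticOn ℂ (f j) U) (hg : ∀ k, AnalyticOn ℂ (g k) U)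
    (h : ∀ z ∈ U, HasSum (fun j => ‖f j z‖ ^ 2) (∑ k, ‖g k z‖ ^ 2)) :
    (∀ j, U.domRestrict (f j) ∈ Submodule.span ℂ (Set.range fun k => U.domRestrict (g k))) ∧
      ¬ LinearIndependent ℂ (fun j => U.domRestrict (f j)) := by
  have hspan := domRestrict_mem_span_of_hasSum_norm_sq hUo hUc hf hg h
  refine ⟨hspan, fun hli => ?_⟩
  have : Finite ι := hli.finite_of_le_span_finite _ _ (Set.range_subset_iff.2 hspan)
  exact not_finite ι

end Rigidity

/-- If `Σ_{k=1}^N |g_k|² = ∑'_j |f_j|²` on a nonempty connected open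
`U ⊆ ℂ^d` with all functions holomorphic, then every `f_j` lies in the span of the `g_k`
(as functions on `U`); in particular the family `(f_j)` is not linearly independent. -/
theorem stmt_1 (d : ℕ) (hd : 1 ≤ d) (N : ℕ)
    (U : Set (Fin d → ℂ)) (hUo : IsOpen U) (hUc : IsConnected U)
    (g : Fin N → (Fin d → ℂ) → ℂ) (hg : ∀ k, AnalyticOn ℂ (g k) U)
    (f : ℕ → (Fin d → ℂ) → ℂ) (hf : ∀ j, AnalyticOn ℂ (f j) U)
    (hsum : ∀ z ∈ U, Summable fun j => ‖f j z‖ ^ 2)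
    (heq : ∀ z ∈ U, ∑ k, ‖g k z‖ ^ 2 = ∑' j, ‖f j z‖ ^ 2) :
    (∀ j, U.restrict (f j) ∈ Submodule.span ℂ (Set.range fun k => U.restrict (g k))) ∧
      ¬ LinearIndependent ℂ (fun j => U.restrict (f j)) :=
  stmt_1_general hUo hUc hf hg fun z hz => heq z hz ▸ (hsum z hz).hasSum
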